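/- Let d∈{FT,MW}, let G=(V,A,2) be a temporal graph with el(a)≥1 for every a∈A, and let r∈V. Then every maximum d-TOB of G rooted at r has vertex set {r} ∪ {u∈V : (r,u,1,2)∈A}. -/

import Mathlib

open scoped Classical

universe u

/-- A temporal arc `(u, v, s, t)`: tail `u`, head `v`, starting time `s`, arrival time `t`. -/
abbrev TArc (α : Type u) := α × α × ℕ × ℕ

/-- The tail vertex of a temporal arc. -/
def TArc.tail {α : Type u} (a : TArc α) : α := a.1

/-- The head vertex of a temporal arc. -/
def TArc.head {α : Type u} (a : TArc α) : α := a.2.1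

/-- The starting time of a temporal arc. -/
def TArc.ts {α : Type u} (a : TArc α) : ℕ := a.2.2.1

/-- The arrival time of a temporal arc. -/
def TArc.ta {α : Type u} (a : TArc α) : ℕ := a.2.2.2

/-- The elapsed time of a temporal arc. -/
def TArc.el {α : Type u} (a : TArc α) : ℕ := TArc.ta a - TArc.ts a

/-- A temporal graph `(V, A, τ)`. -/
structure TempGraph (α : Type u) where
  V : Finset α
  A : Finset (TArc α)
  τ : ℕ
  nonempty : V.Nonempty
  valid : ∀ a ∈ A, TArc.tail a ∈ V ∧ TArc.head a ∈ V ∧ TArc.tail a ≠ TArc.head a ∧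
      1 ≤ TArc.ts a ∧ TArc.ts a ≤ TArc.ta a ∧ TArc.ta a ≤ τ

variable {α : Type u}

/-- `IsWalk S u v L` : `L` is the list of arcs of a temporal `(u,v)`-walk using arcs from `S`
(the trivial walk, `L = []`, requires `u = v`). -/
def IsWalk (S : Finset (TArc α)) : α → α → List (TArc α) → Prop
  | u, v, [] => u = v
  | u, v, a :: L => a ∈ S ∧ TArc.tail a = u ∧ (∀ b ∈ L.head?, TArc.ta a ≤ TArc.ts b) ∧
      IsWalk S (TArc.head a) v L

/-- The starting time of a walk (`0` for the trivial walk). -/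
def tsW (L : List (TArc α)) : ℕ := (L.map TArc.ts).headI

/-- The arrival time of a walk (`0` for the trivial walk). -/
def taW (L : List (TArc α)) : ℕ := (L.map TArc.ta).getLastD 0

/-- The duration of a walk. -/
def durW (L : List (TArc α)) : ℕ := taW L - tsW L

/-- The travelling time of a walk. -/
def ttW (L : List (TArc α)) : ℕ := (L.map TArc.el).sum

/-- The waiting time of a walk. -/
def waitW (L : List (TArc α)) : ℕ :=
  (List.zipWith (fun a b => TArc.ts b - TArc.ta a) L L.tail).sum

/-- The final vertex of a walk starting at `u` with arc list `L`. -/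
def endv (u : α) (L : List (TArc α)) : α := (L.map TArc.head).getLastD u

/-- The sequence of vertices of a walk starting at `u` with arc list `L`. -/
def verts (u : α) (L : List (TArc α)) : List α := u :: L.map TArc.head

/-- A walk is a (temporal) path when its vertices are pairwise distinct. -/
def IsPathList (u : α) (L : List (TArc α)) : Prop := (verts u L).Nodup

/-- The six optimisation criteria: earliest arrival, fastest time, latest departure,
minimum transfers, minimum waiting time, shortest travelling time. -/
inductive DistKind : Type
  | EA | FT | LD | MT | MW | ST
  deriving DecidableEq

/-- The value of a walk for each criterion. -/
def wval : DistKind → List (TArc α) → ℕ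
  | .EA, L => taW L
  | .FT, L => durW L
  | .LD, L => tsW L
  | .MT, L => L.length
  | .MW, L => waitW L
  | .ST, L => ttW L

/-- `Realizes d S u v L` : `L` is a temporal `(u,v)`-walk within `S` attaining the optimum
(minimum, or maximum for `LD`) of the criterion `d` among all temporal `(u,v)`-walks in `S`. -/
def Realizes (d : DistKind) (S : Finset (TArc α)) (u v : α) (L : List (TArc α)) : Prop :=
  IsWalk S u v L ∧ ∀ L', IsWalk S u v L' →
    if d = DistKind.LD then wval d L' ≤ wval d L else wval d L ≤ wval d L'

/-- The distance value `d_G(u,v) ∈ ℕ∞` (`+∞` when `v` is not temporally reachable from `u`;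
`LD_G(u,u) = τ + 1`). -/
noncomputable def distVal (d : DistKind) (G : TempGraph α) (u v : α) : ℕ∞ :=
  if d = DistKind.LD then
    (if u = v then ((G.τ : ℕ∞) + 1)
     else if ∃ L, IsWalk G.A u v L then
       sSup {n : ℕ∞ | ∃ L, IsWalk G.A u v L ∧ n = (tsW L : ℕ∞)}
     else ⊤)
  else sInf {n : ℕ∞ | ∃ L, IsWalk G.A u v L ∧ n = (wval d L : ℕ∞)}

/-- Every vertex of `Vs` is temporally reachable from `r` using arcs from `S`. -/
def ReachAll (S : Finset (TArc α)) (Vs : Finset α) (r : α) : Prop :=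
  ∀ v ∈ Vs, ∃ L, IsWalk S r v L

/-- `B` is a temporal out-branching (TOB) with root `r`: its arc set is a minimal set of
temporal arcs such that every vertex of `B` is temporally reachable from `r`. -/
def IsTOB (B : TempGraph α) (r : α) : Prop :=
  r ∈ B.V ∧ ReachAll B.A B.V r ∧ ∀ S ⊂ B.A, ¬ ReachAll S B.V r

/-- `B` is a temporal subgraph of `G`. -/
def IsSubgraph (B G : TempGraph α) : Prop :=
  B.V ⊆ G.V ∧ B.A ⊆ G.A ∧ B.τ ≤ G.τ

/-- `B` is a `d`-TOB of `G` rooted at `r`. -/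
def IsDTOB (d : DistKind) (G B : TempGraph α) (r : α) : Prop :=
  IsTOB B r ∧ IsSubgraph B G ∧ ∀ v ∈ B.V, distVal d B r v = distVal d G r v

/-- `B` is a spanning `d`-TOB of `G` rooted at `r`. -/
def IsSpanningDTOB (d : DistKind) (G B : TempGraph α) (r : α) : Prop :=
  IsDTOB d G B r ∧ B.V = G.V

/-- `B` is a maximum `d`-TOB of `G` rooted at `r`. -/
def IsMaxDTOB (d : DistKind) (G B : TempGraph α) (r : α) : Prop :=
  IsDTOB d G B r ∧ ∀ B', IsDTOB d G B' r → B'.V.card ≤ B.V.card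

/-- The in-degree of `v` with respect to the arc set `S`. -/
noncomputable def inDeg (S : Finset (TArc α)) (v : α) : ℕ :=
  (S.filter fun a => TArc.head a = v).card

/-- A walk in a (static) digraph with arc set `E`. -/
def IsDWalk (E : Finset (α × α)) : α → α → List (α × α) → Prop
  | u, v, [] => u = v
  | u, v, e :: L => e ∈ E ∧ e.1 = u ∧ IsDWalk E e.2 v L

/-- The digraph `(Vs, E)` is an out-branching with root `r`: every `v ∈ Vs` is the end of
a unique `(r,v)`-walk. -/
def IsOutBranching (Vs : Finset α) (E : Finset (α × α)) (r : α) : Prop :=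
  ∀ v ∈ Vs, ∃! L, IsDWalk E r v L

/-- The arc of the underlying multidigraph corresponding to a temporal arc. -/
def proj (a : TArc α) : α × α := (TArc.tail a, TArc.head a)

/-- The temporal subgraph of `G` induced by a set of vertices `Z`. -/
noncomputable def induced (G : TempGraph α) (Z : Finset α) (hne : Z.Nonempty) (hZ : Z ⊆ G.V) :
    TempGraph α where
  V := Z
  A := G.A.filter fun a => TArc.tail a ∈ Z ∧ TArc.head a ∈ Z
  τ := G.τ
  nonempty := hne
  valid := by
    intro a ha
    simp only [Finset.mem_filter] at ha
    obtain ⟨haA, h1, h2⟩ := ha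
    obtain ⟨-, -, h3, h4, h5, h6⟩ := G.valid a haA
    exact ⟨h1, h2, h3, h4, h5, h6⟩

/-- The reverse of a temporal arc with respect to lifetime `τ`. -/
def TArc.rev (τ : ℕ) (a : TArc α) : TArc α :=
  (TArc.head a, TArc.tail a, τ + 1 - TArc.ta a, τ + 1 - TArc.ts a)

/-- The reverse of a temporal graph. -/
noncomputable def TempGraph.rev (G : TempGraph α) : TempGraph α where
  V := G.V
  A := G.A.image (TArc.rev G.τ)
  τ := G.τ
  nonempty := G.nonempty
  valid := by
    intro b hb
    simp only [Finset.mem_image] at hb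
    obtain ⟨a, ha, rfl⟩ := hb
    obtain ⟨h1, h2, h3, h4, h5, h6⟩ := G.valid a ha
    refine ⟨h2, h1, Ne.symm h3, ?_, ?_, ?_⟩ <;>
      simp only [TArc.rev, TArc.tail, TArc.head, TArc.ts, TArc.ta] at * <;> omega

/-- The reverse of a temporal walk. -/
def revWalk (τ : ℕ) (L : List (TArc α)) : List (TArc α) := (L.map (TArc.rev τ)).reverse

/-- Every vertex of `Vs` temporally reaches `r` using arcs from `S`. -/
def CoReachAll (S : Finset (TArc α)) (Vs : Finset α) (r : α) : Prop :=
  ∀ v ∈ Vs, ∃ L, IsWalk S v r L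

/-- `B` is a temporal in-branching (TIB) with root `r`. -/
def IsTIB (B : TempGraph α) (r : α) : Prop :=
  r ∈ B.V ∧ CoReachAll B.A B.V r ∧ ∀ S ⊂ B.A, ¬ CoReachAll S B.V r

/-- `B` is a `d`-TIB of `G` rooted at `r`. -/
def IsDTIB (d : DistKind) (G B : TempGraph α) (r : α) : Prop :=
  IsTIB B r ∧ IsSubgraph B G ∧ ∀ v ∈ B.V, distVal d B v r = distVal d G v r

/-- `B` is a maximum `d`-TIB of `G` rooted at `r`. -/
def IsMaxDTIB (d : DistKind) (G B : TempGraph α) (r : α) : Prop :=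
  IsDTIB d G B r ∧ ∀ B', IsDTIB d G B' r → B'.V.card ≤ B.V.card

/-- The reverse of a temporal subgraph, with respect to the ambient lifetime `τ`. -/
noncomputable def revSub (τ : ℕ) (B : TempGraph α) (h : B.τ ≤ τ) : TempGraph α where
  V := B.V
  A := B.A.image (TArc.rev τ)
  τ := τ
  nonempty := B.nonempty
  valid := by
    intro b hb
    simp only [Finset.mem_image] at hb
    obtain ⟨a, ha, rfl⟩ := hb
    obtain ⟨h1, h2, h3, h4, h5, h6⟩ := B.valid a ha
    refine ⟨h2, h1, Ne.symm h3, ?_, ?_, ?_⟩ <;>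
      simp only [TArc.rev, TArc.tail, TArc.head, TArc.ts, TArc.ta] at * <;> omega

/-- `L` (a walk from `u`) is `d`-prefix-optimal: every prefix of it realizes the distance `d`
from `u` to the end vertex of the prefix. -/
def PrefixOptimal (d : DistKind) (S : Finset (TArc α)) (u : α) (L : List (TArc α)) : Prop :=
  ∀ h ≤ L.length, Realizes d S u (endv u (L.take h)) (L.take h)

/-- `EAd_G(u,v)`: the minimum arrival time among the walks realizing `d_G(u,v)`. -/
noncomputable def eaVal (d : DistKind) (G : TempGraph α) (u v : α) : ℕ∞ :=
  sInf {n : ℕ∞ | ∃ L, Realizes d G.A u v L ∧ n = (taW L : ℕ∞)}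

/-- `G'` is a `d`-temporal out-spanning subgraph (d-TOSS) with root `r` of `G`. -/
def IsDTOSS (d : DistKind) (G G' : TempGraph α) (r : α) : Prop :=
  IsSubgraph G' G ∧ G'.V = G.V ∧
    ∀ v ∈ G.V, ∃ L, IsWalk G'.A r v L ∧ Realizes d G.A r v L

/-- Satisfiability of a CNF formula given by the positive/negative occurrence sets
of its clauses. -/
def Satisfiable (n m : ℕ) (pos neg : Fin m → Finset (Fin n)) : Prop :=
  ∃ σ : Fin n → Bool, ∀ j : Fin m, (∃ i ∈ pos j, σ i = true) ∨ ∃ i ∈ neg j, σ i = false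

/-!
Suppose that no arc leaving `r` can be followed by another arc. Then a walk from `r` to a vertex
`v ≠ r` is a single arc, so every TOB rooted at `r` lives inside `r` and its out-neighbours.
Conversely, keeping for each out-neighbour one arc from `r` that is optimal for `d` gives a star
that is a `d`-TOB on all these vertices. With lifetime `2` and positive elapsed times, every arc
departs at time `1` and arrives at time `2`, so no two arcs can be concatenated.
-/

section Walk

variable {S T : Finset (TArc α)} {d : DistKind} {u v : α} {L : List (TArc α)} {a : TArc α}

lemma isWalk_singleton : IsWalk S u v [a] ↔ a ∈ S ∧ TArc.tail a = u ∧ TArc.head a = v := by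
  simp [IsWalk]

lemma IsWalk.mono (hST : S ⊆ T) : ∀ {L : List (TArc α)} {u : α}, IsWalk S u v L → IsWalk T u v L
  | [], _, huv => huv
  | _ :: _, _, ⟨ha, htail, htime, hL⟩ => ⟨hST ha, htail, htime, hL.mono hST⟩

lemma IsWalk.tsW_le_sup (hL : IsWalk S u v L) : tsW L ≤ S.sup TArc.ts := by
  cases L with
  | nil => exact Nat.zero_le _
  | cons a L => exact Finset.le_sup (f := TArc.ts) hL.1

lemma wval_nil (d : DistKind) : wval d ([] : List (TArc α)) = 0 := by
  cases d <;> rfl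

lemma Realizes.of_subset (hL : Realizes d T u v L) (hST : S ⊆ T) (hLS : IsWalk S u v L) :
    Realizes d S u v L :=
  ⟨hLS, fun L' hL' => hL.2 L' (hL'.mono hST)⟩

lemma IsWalk.exists_realizes (d : DistKind) (hL : IsWalk S u v L) : ∃ L', Realizes d S u v L' := by
  have hne : (wval d '' {L | IsWalk S u v L}).Nonempty := ⟨_, L, hL, rfl⟩
  by_cases hd : d = DistKind.LD
  · subst hd
    have hbdd : BddAbove (wval .LD '' {L | IsWalk S u v L}) :=
      ⟨S.sup TArc.ts, Set.forall_mem_image.mpr fun _ hL' => hL'.tsW_le_sup⟩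
    obtain ⟨L', hL', hmax⟩ := Nat.sSup_mem hne hbdd
    refine ⟨L', hL', fun L'' hL'' => ?_⟩
    rw [if_pos rfl, hmax]
    exact le_csSup hbdd ⟨L'', hL'', rfl⟩
  · obtain ⟨L', hL', hmin⟩ := Nat.sInf_mem hne
    refine ⟨L', hL', fun L'' hL'' => ?_⟩
    rw [if_neg hd, hmin]
    exact Nat.sInf_le ⟨L'', hL'', rfl⟩

end Walk

section Distance

variable {d : DistKind} {G : TempGraph α} {u v : α} {L : List (TArc α)}

lemma distVal_self (d : DistKind) (G : TempGraph α) (u : α) :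
    distVal d G u u = if d = DistKind.LD then (G.τ : ℕ∞) + 1 else 0 := by
  by_cases hd : d = DistKind.LD
  · simp [distVal, hd]
  · rw [distVal, if_neg hd, if_neg hd]
    exact nonpos_iff_eq_zero.mp (sInf_le ⟨[], rfl, by simp [wval_nil]⟩)

lemma Realizes.distVal_eq (hL : Realizes d G.A u v L) (huv : u ≠ v) :
    distVal d G u v = wval d L := by
  obtain ⟨hwalk, hopt⟩ := hL
  by_cases hd : d = DistKind.LD
  · subst hd
    rw [distVal, if_pos rfl, if_neg huv, if_pos ⟨L, hwalk⟩]
    refine IsGreatest.csSup_eq ⟨⟨L, hwalk, rfl⟩, ?_⟩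
    rintro _ ⟨L', hL', rfl⟩
    exact Nat.cast_le.mpr (by simpa [wval] using hopt L' hL')
  · rw [distVal, if_neg hd]
    refine IsLeast.csInf_eq ⟨⟨L, hwalk, rfl⟩, ?_⟩
    rintro _ ⟨L', hL', rfl⟩
    exact Nat.cast_le.mpr (by simpa [hd] using hopt L' hL')

end Distance

/-- No arc of `S` leaving `r` can be followed by another arc of `S`: the walks from `r` make no
transfer. -/
def TransferFree (S : Finset (TArc α)) (r : α) : Prop :=
  ∀ a ∈ S, TArc.tail a = r → ∀ b ∈ S, TArc.tail b = TArc.head a → TArc.ts b < TArc.ta a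

section TransferFree

variable {S : Finset (TArc α)} {r v : α} {L : List (TArc α)}

lemma transferFree_of_forall_ts_ta {s t : ℕ} (hst : s < t)
    (hS : ∀ a ∈ S, TArc.ts a = s ∧ TArc.ta a = t) : TransferFree S r := by
  intro a ha _ b hb _
  rwa [(hS b hb).1, (hS a ha).2]

lemma TransferFree.exists_eq_singleton (hS : TransferFree S r) (hrv : r ≠ v)
    (hL : IsWalk S r v L) : ∃ a, L = [a] := by
  match L, hL with
  | [], hL => exact absurd hL hrv
  | [a], _ => exact ⟨a, rfl⟩
  | a :: b :: _, ⟨ha, har, htime, hb, hba, _⟩ =>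
    exact absurd (htime b rfl) (hS a ha har b hb hba).not_ge

end TransferFree

namespace TempGraph

variable {G : TempGraph α} {S : Finset (TArc α)} {d : DistKind} {r v : α}

/-- The temporal arcs of `G` leaving `r`. -/
noncomputable def outArcs (G : TempGraph α) (r : α) : Finset (TArc α) :=
  G.A.filter fun a => TArc.tail a = r

/-- The out-neighbourhood of `r` in `G`: the heads of the temporal arcs leaving `r`, at any time. -/
noncomputable def outNeighbors (G : TempGraph α) (r : α) : Finset α :=
  (G.outArcs r).image TArc.head

lemma mem_outArcs {a : TArc α} : a ∈ G.outArcs r ↔ a ∈ G.A ∧ TArc.tail a = r :=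
  Finset.mem_filter

lemma mem_outNeighbors : v ∈ G.outNeighbors r ↔ ∃ a ∈ G.outArcs r, TArc.head a = v :=
  Finset.mem_image

lemma ne_head_of_mem_outArcs {a : TArc α} (ha : a ∈ G.outArcs r) : r ≠ TArc.head a := by
  obtain ⟨haG, rfl⟩ := mem_outArcs.mp ha
  exact (G.valid a haG).2.2.1

lemma ne_of_mem_outNeighbors (hv : v ∈ G.outNeighbors r) : r ≠ v := by
  obtain ⟨a, ha, rfl⟩ := mem_outNeighbors.mp hv
  exact ne_head_of_mem_outArcs ha

lemma outNeighbors_eq_filter {s t : ℕ} (hG : ∀ a ∈ G.A, TArc.ts a = s ∧ TArc.ta a = t) :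
    G.outNeighbors r = G.V.filter fun u => ((r, u, s, t) : TArc α) ∈ G.A := by
  ext u
  rw [mem_outNeighbors, Finset.mem_filter]
  constructor
  · rintro ⟨a, ha, rfl⟩
    obtain ⟨haG, rfl⟩ := mem_outArcs.mp ha
    obtain ⟨rfl, rfl⟩ := hG a haG
    exact ⟨(G.valid a haG).2.1, haG⟩
  · rintro ⟨-, hu⟩
    exact ⟨_, mem_outArcs.mpr ⟨hu, rfl⟩, rfl⟩

lemma ts_eq_one_and_ta_eq_τ {a : TArc α} (ha : a ∈ G.A) (hel : G.τ - 1 ≤ TArc.el a) :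
    TArc.ts a = 1 ∧ TArc.ta a = G.τ := by
  obtain ⟨-, -, -, hs, hst, ht⟩ := G.valid a ha
  unfold TArc.el at hel
  omega

lemma transferFree_of_subset_outArcs (hS : S ⊆ G.outArcs r) : TransferFree S r := by
  intro a ha _ b hb hba
  have hbr : TArc.tail b = r := (mem_outArcs.mp (hS hb)).2
  exact absurd (hbr.symm.trans hba) (ne_head_of_mem_outArcs (hS ha))

lemma subset_insert_outNeighbors_of_reachAll (hG : TransferFree G.A r) (hSG : S ⊆ G.A)
    {Z : Finset α} (hZ : ReachAll S Z r) : Z ⊆ insert r (G.outNeighbors r) := by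
  intro v hv
  obtain ⟨L, hL⟩ := hZ v hv
  refine Finset.mem_insert.mpr (or_iff_not_imp_left.mpr fun hvr => ?_)
  have hLG : IsWalk G.A r v L := hL.mono hSG
  obtain ⟨a, rfl⟩ := hG.exists_eq_singleton (Ne.symm hvr) hLG
  obtain ⟨ha, har, hav⟩ := isWalk_singleton.mp hLG
  exact mem_outNeighbors.mpr ⟨a, mem_outArcs.mpr ⟨ha, har⟩, hav⟩

lemma exists_realizes_singleton (d : DistKind) (hG : TransferFree G.A r)
    (hv : v ∈ G.outNeighbors r) : ∃ a, Realizes d G.A r v [a] := by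
  obtain ⟨a, ha, hav⟩ := mem_outNeighbors.mp hv
  obtain ⟨haG, har⟩ := mem_outArcs.mp ha
  obtain ⟨L, hL⟩ := (isWalk_singleton.mpr ⟨haG, har, hav⟩).exists_realizes d
  obtain ⟨b, rfl⟩ := hG.exists_eq_singleton (ne_of_mem_outNeighbors hv) hL.1
  exact ⟨b, hL⟩

/-- The star formed by `r` and a set `S` of temporal arcs of `G` leaving `r`, with the lifetime
of `G`. -/
noncomputable def outStar (G : TempGraph α) (r : α) (S : Finset (TArc α))
    (hS : S ⊆ G.outArcs r) : TempGraph α where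
  V := insert r (S.image TArc.head)
  A := S
  τ := G.τ
  nonempty := Finset.insert_nonempty _ _
  valid a ha := by
    obtain ⟨haG, har⟩ := mem_outArcs.mp (hS ha)
    exact ⟨har ▸ Finset.mem_insert_self _ _,
      Finset.mem_insert_of_mem (Finset.mem_image_of_mem _ ha), (G.valid a haG).2.2⟩

lemma isSubgraph_outStar (hr : r ∈ G.V) (hS : S ⊆ G.outArcs r) :
    IsSubgraph (G.outStar r S hS) G := by
  have hSG : S ⊆ G.A := hS.trans (Finset.filter_subset _ _)
  exact ⟨Finset.insert_subset hr (Finset.image_subset_iff.mpr fun a ha => (G.valid a (hSG ha)).2.1),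
    hSG, le_rfl⟩

lemma isTOB_outStar (hS : S ⊆ G.outArcs r) (hinj : Set.InjOn TArc.head (S : Set (TArc α))) :
    IsTOB (G.outStar r S hS) r := by
  refine ⟨Finset.mem_insert_self _ _, fun v hv => ?_, fun T hTS hreach => ?_⟩
  · rcases Finset.mem_insert.mp hv with rfl | hv
    · exact ⟨[], rfl⟩
    · obtain ⟨a, ha, rfl⟩ := Finset.mem_image.mp hv
      exact ⟨[a], isWalk_singleton.mpr ⟨ha, (mem_outArcs.mp (hS ha)).2, rfl⟩⟩
  · obtain ⟨a, ha, haT⟩ := Finset.exists_of_ssubset hTS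
    obtain ⟨L, hL⟩ :=
      hreach (TArc.head a) (Finset.mem_insert_of_mem (Finset.mem_image_of_mem _ ha))
    obtain ⟨b, rfl⟩ := (transferFree_of_subset_outArcs (hTS.1.trans hS)).exists_eq_singleton
      (ne_head_of_mem_outArcs (hS ha)) hL
    obtain ⟨hb, -, hba⟩ := isWalk_singleton.mp hL
    exact haT (hinj (hTS.1 hb) ha hba ▸ hb)

lemma isDTOB_outStar (hr : r ∈ G.V) (hS : S ⊆ G.outArcs r)
    (hinj : Set.InjOn TArc.head (S : Set (TArc α)))
    (hopt : ∀ a ∈ S, Realizes d G.A r (TArc.head a) [a]) :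
    IsDTOB d G (G.outStar r S hS) r := by
  have hsub := isSubgraph_outStar hr hS
  refine ⟨isTOB_outStar hS hinj, hsub, fun v hv => ?_⟩
  rcases Finset.mem_insert.mp hv with rfl | hv
  · rw [distVal_self, distVal_self, outStar]
  · obtain ⟨a, ha, rfl⟩ := Finset.mem_image.mp hv
    obtain ⟨-, har, -⟩ := isWalk_singleton.mp (hopt a ha).1
    have hra := ne_head_of_mem_outArcs (hS ha)
    have hstar : Realizes d (G.outStar r S hS).A r (TArc.head a) [a] :=
      (hopt a ha).of_subset hsub.2.1 (isWalk_singleton.mpr ⟨ha, har, rfl⟩)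
    rw [hstar.distVal_eq hra, (hopt a ha).distVal_eq hra]

lemma exists_isDTOB_V_eq (hr : r ∈ G.V) {Z : Finset α}
    (hZ : ∀ v ∈ Z, ∃ a, Realizes d G.A r v [a]) :
    ∃ B, IsDTOB d G B r ∧ B.V = insert r Z := by
  choose! arc hopt using hZ
  have hwalk (v) (hv : v ∈ Z) := isWalk_singleton.mp (hopt v hv).1
  have hhead (v) (hv : v ∈ Z) : TArc.head (arc v) = v := (hwalk v hv).2.2
  have hS : Z.image arc ⊆ G.outArcs r := Finset.image_subset_iff.mpr fun v hv =>
    mem_outArcs.mpr ⟨(hwalk v hv).1, (hwalk v hv).2.1⟩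
  refine ⟨G.outStar r (Z.image arc) hS, isDTOB_outStar hr hS ?_ ?_, ?_⟩
  · rw [Finset.coe_image]
    exact Set.LeftInvOn.injOn (f₁' := arc) (Set.forall_mem_image.mpr fun v hv => by rw [hhead v hv])
  · refine Finset.forall_mem_image.mpr fun v hv => ?_
    rw [hhead v hv]
    exact hopt v hv
  · have hheads : (Z.image arc).image TArc.head = Z := by
      rw [Finset.image_image]
      exact (Finset.image_congr hhead).trans Finset.image_id
    exact congrArg (insert r) hheads

end TempGraph

theorem stmt_15_general {G B : TempGraph α} {r : α} {d : DistKind} (hG : TransferFree G.A r)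
    (hB : IsMaxDTOB d G B r) : B.V = insert r (G.outNeighbors r) := by
  obtain ⟨⟨⟨hrB, hreach, -⟩, ⟨hBV, hBA, -⟩, -⟩, hmax⟩ := hB
  obtain ⟨B', hB', hB'V⟩ := TempGraph.exists_isDTOB_V_eq (hBV hrB)
    fun v hv => TempGraph.exists_realizes_singleton d hG hv
  have hcard : (insert r (G.outNeighbors r)).card ≤ B.V.card := hB'V ▸ hmax B' hB'
  exact Finset.eq_of_subset_of_card_le
    (TempGraph.subset_insert_outNeighbors_of_reachAll hG hBA hreach) hcard

/-- from Proposition `prop:gaps_FTMW`, case `τ = 2`: for `d ∈ {FT, MW}`, if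
`G` has lifetime `2` and every arc has elapsed time at least `1`, then every maximum `d`-TOB
of `G` rooted at `r` has vertex set `{r} ∪ {u ∈ V : (r,u,1,2) ∈ A}`. -/
theorem stmt_15 {α : Type u} (G : TempGraph α) (hτ : G.τ = 2)
    (hel : ∀ a ∈ G.A, 1 ≤ TArc.el a) (r : α) (hr : r ∈ G.V)
    (d : DistKind) (hd : d = DistKind.FT ∨ d = DistKind.MW)
    (B : TempGraph α) (hB : IsMaxDTOB d G B r) :
    B.V = insert r (G.V.filter fun u => ((r, u, 1, 2) : TArc α) ∈ G.A) := by
  have htimes : ∀ a ∈ G.A, TArc.ts a = 1 ∧ TArc.ta a = 2 := fun a ha =>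
    hτ ▸ TempGraph.ts_eq_one_and_ta_eq_τ ha (hτ ▸ hel a ha)
  rw [stmt_15_general (transferFree_of_forall_ts_ta one_lt_two htimes) hB,
    TempGraph.outNeighbors_eq_filter htimes]
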